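/- arXiv:1002.4854 — 2 statements merged into one kernel-verified Lean document; each statement's English description precedes it below -/
import Mathlib

section
/- Let 𝔤 be a finite-dimensional Lie algebra over a field of characteristic 0 whose Killing form is nondegenerate, and let (h,e,f) be an sl₂-triple in 𝔤 such that 𝔤(i) = 0 for every odd integer i. If there exist e', f' ∈ 𝔤 such that (h/2, e', f') is an sl₂-triple, then dim 𝔤^e_nil is an even integer. -/
open LieAlgebra Module

/-!
For an `sl₂`-triple `(h, e, f)` acting on a finite-dimensional module over a field of
characteristic zero, `h` is semisimple: if `v` is a generalized eigenvector killed by `e`, the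
formula for `e f ^ (n + 1) v` forces `v` to be an eigenvector of weight a natural number, and the
general case follows by descending along powers of `e`. Moreover `e` maps the weight space `μ`
onto the weight space `μ + 2` unless `-(μ + 2)` is a natural number, because `e ∘ f` is injective
there. Hence the part of the kernel of `e` in positive weights has dimension
`dim 𝔤(1) + dim 𝔤(2)`.

For an invariant nondegenerate form `Φ` on `𝔤`, semisimplicity of `h` makes `𝔤(-μ)` and `𝔤(μ)`
dual to each other, so `(x, y) ↦ Φ([f, x], y)` is a symplectic form on `𝔤(1)`, for every
`sl₂`-triple. Applied to `(h, e, f)` this shows that `dim 𝔤(1)` is even; applied to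
`(h/2, e', f')`, whose weight space of weight one is `𝔤(2)`, it shows that `dim 𝔤(2)` is even.
-/

section LinearAlgebra

variable {k V W ι : Type*} [Field k] [AddCommGroup V] [Module k V] [FiniteDimensional k V]
  [AddCommGroup W] [Module k W]

theorem even_finrank_of_isAlt_of_separatingLeft [NeZero (2 : k)] {B : LinearMap.BilinForm k V}
    (hB : B.IsAlt) (hs : B.SeparatingLeft) : Even (finrank k V) := by
  let b := finBasis k V
  let A := LinearMap.BilinForm.toMatrix b B
  have hdet : A.det ≠ 0 :=
    (LinearMap.BilinForm.nondegenerate_iff_det_ne_zero b).mp (.ofSeparatingLeft hs)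
  have hskew : A.transpose = -A := by
    ext i j
    simpa [A, LinearMap.BilinForm.toMatrix_apply] using (hB.neg_eq (b i) (b j)).symm
  by_contra hodd
  have hneg : A.det = -A.det := by
    simpa [Matrix.det_neg, (Nat.not_even_iff_odd.mp hodd).neg_one_pow]
      using congrArg Matrix.det hskew
  have htwo : 2 * A.det = 0 := by linear_combination hneg
  exact (mul_ne_zero two_ne_zero hdet) htwo

theorem finrank_map_add_finrank_ker_inf (g : V →ₗ[k] W) (p : Submodule k V) :
    finrank k (p.map g) + finrank k (LinearMap.ker g ⊓ p : Submodule k V) = finrank k p := by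
  rw [← (g.domRestrict p).finrank_range_add_finrank_ker, LinearMap.range_domRestrict,
    LinearMap.ker_domRestrict, ← Submodule.finrank_map_subtype_eq p, Submodule.map_comap_subtype,
    inf_comm]

theorem finrank_biSup_insert {p : ι → Submodule k V} (hp : iSupIndep p) {a : ι} {s : Set ι}
    (ha : a ∉ s) :
    finrank k (⨆ i ∈ insert a s, p i : Submodule k V) =
      finrank k (p a) + finrank k (⨆ i ∈ s, p i : Submodule k V) := by
  rw [iSup_insert, ← Submodule.finrank_sup_add_finrank_inf_eq, (hp.disjoint_biSup ha).eq_bot,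
    finrank_bot, add_zero]

theorem isCompl_eigenspace_range {g : End k V} {μ : k}
    (hμ : g.maxGenEigenspace μ = g.eigenspace μ) :
    IsCompl (g.eigenspace μ) (LinearMap.range (g - μ • 1)) := by
  have hker : LinearMap.ker (g - μ • 1) = g.eigenspace μ := by
    ext x
    simp [sub_eq_zero]
  rw [← hker]
  refine (Submodule.isCompl_iff_disjoint _ _ ?_).mpr ?_
  · rw [add_comm, LinearMap.finrank_range_add_finrank_ker]
  rw [Submodule.disjoint_def]
  rintro _ hx ⟨y, rfl⟩
  have hy : y ∈ g.maxGenEigenspace μ :=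
    (End.mem_maxGenEigenspace g μ y).mpr ⟨2, by rwa [pow_two, End.mul_apply]⟩
  rwa [hμ, ← hker] at hy

end LinearAlgebra

namespace Sl2Triple

open LieModule

section CommRing

variable {R L M : Type*} [CommRing R] [LieRing L] [LieAlgebra R L]
  [AddCommGroup M] [Module R M] [LieRingModule L M] [LieModule R L M] {h e f : L}

theorem lie_e_pow_succ_toEnd_f_apply (t : IsSl2Triple h e f) (v : M) (n : ℕ) :
    ⁅e, (toEnd R L M f ^ (n + 1)) v⁆ = (toEnd R L M f ^ (n + 1)) ⁅e, v⁆ +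
      (n + 1 : R) • (toEnd R L M f ^ n) (⁅h, v⁆ - (n : R) • v) := by
  induction n generalizing v with
  | zero => simp [leibniz_lie e f v, t.lie_e_f, add_comm]
  | succ n ih =>
    have hef : ⁅e, ⁅f, v⁆⁆ = ⁅h, v⁆ + ⁅f, ⁅e, v⁆⁆ := by rw [leibniz_lie, t.lie_e_f]
    have hhf : ⁅h, ⁅f, v⁆⁆ = ⁅f, ⁅h, v⁆⁆ - (2 : R) • ⁅f, v⁆ := by
      rw [leibniz_lie, t.lie_lie_smul_f R, neg_lie, smul_lie]; abel
    have hpow (m : ℕ) (x : M) : (toEnd R L M f ^ (m + 1)) x = (toEnd R L M f ^ m) ⁅f, x⁆ := by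
      rw [pow_succ, End.mul_apply, toEnd_apply_apply]
    rw [hpow (n + 1) v, hpow (n + 1) ⁅e, v⁆, ih, hef, hhf]
    simp only [hpow n, map_add, map_sub, map_smul, lie_add, lie_sub, lie_smul]
    push_cast
    module

theorem lie_h_pow_toEnd_f_apply (t : IsSl2Triple h e f) (v : M) (n : ℕ) :
    ⁅h, (toEnd R L M f ^ n) v⁆ =
      (toEnd R L M f ^ n) ⁅h, v⁆ - (2 * n : R) • (toEnd R L M f ^ n) v := by
  induction n with
  | zero => simp
  | succ n ih =>
    rw [pow_succ', End.mul_apply, End.mul_apply, toEnd_apply_apply, toEnd_apply_apply,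
      leibniz_lie h, t.lie_lie_smul_f R, neg_lie, smul_lie, ih, lie_sub, lie_smul]
    push_cast
    module

theorem lie_e_mem_eigenspace (t : IsSl2Triple h e f) {μ : R} {v : M}
    (hv : v ∈ (toEnd R L M h).eigenspace μ) : ⁅e, v⁆ ∈ (toEnd R L M h).eigenspace (μ + 2) := by
  simpa [End.mem_eigenspace_iff] using t.lie_h_pow_toEnd_e (End.mem_eigenspace_iff.mp hv) 1

theorem lie_f_mem_eigenspace (t : IsSl2Triple h e f) {μ : R} {v : M}
    (hv : v ∈ (toEnd R L M h).eigenspace μ) : ⁅f, v⁆ ∈ (toEnd R L M h).eigenspace (μ - 2) := by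
  have hhv : ⁅h, v⁆ = μ • v := End.mem_eigenspace_iff.mp hv
  rw [End.mem_eigenspace_iff, toEnd_apply_apply, leibniz_lie, hhv, t.lie_lie_smul_f R, neg_lie,
    smul_lie, lie_smul]
  module

theorem lie_e_mem_maxGenEigenspace (t : IsSl2Triple h e f) {μ : R} {v : M}
    (hv : v ∈ (toEnd R L M h).maxGenEigenspace μ) :
    ⁅e, v⁆ ∈ (toEnd R L M h).maxGenEigenspace (μ + 2) := by
  have he : e ∈ (toEnd R L L h).maxGenEigenspace 2 :=
    End.eigenspace_le_maxGenEigenspace (End.mem_eigenspace_iff.mpr (t.lie_h_e_smul R))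
  exact add_comm 2 μ ▸ lie_mem_maxGenEigenspace_toEnd he hv

theorem lie_f_mem_maxGenEigenspace (t : IsSl2Triple h e f) {μ : R} {v : M}
    (hv : v ∈ (toEnd R L M h).maxGenEigenspace μ) :
    ⁅f, v⁆ ∈ (toEnd R L M h).maxGenEigenspace (μ - 2) := by
  have hf : f ∈ (toEnd R L L h).maxGenEigenspace (-2) :=
    End.eigenspace_le_maxGenEigenspace
      (End.mem_eigenspace_iff.mpr ((t.lie_lie_smul_f R).trans (neg_smul _ _).symm))
  exact neg_add_eq_sub 2 μ ▸ lie_mem_maxGenEigenspace_toEnd hf hv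

theorem pow_toEnd_f_mem_maxGenEigenspace (t : IsSl2Triple h e f) {μ : R} {v : M}
    (hv : v ∈ (toEnd R L M h).maxGenEigenspace μ) (n : ℕ) :
    (toEnd R L M f ^ n) v ∈ (toEnd R L M h).maxGenEigenspace (μ - 2 * n) := by
  induction n with
  | zero => simpa using hv
  | succ n ih =>
    have hμ : μ - 2 * (n + 1 : ℕ) = μ - 2 * n - 2 := by push_cast; ring
    rw [hμ, pow_succ', End.mul_apply]
    exact lie_f_mem_maxGenEigenspace t ih

end CommRing

section Field

variable {k L M : Type*} [Field k] [CharZero k] [LieRing L] [LieAlgebra k L]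
  [AddCommGroup M] [Module k M] [LieRingModule L M] [LieModule k L M] [FiniteDimensional k M]
  {h e f : L}

theorem isNilpotent_toEnd_f (t : IsSl2Triple h e f) : IsNilpotent (toEnd k L M f) := by
  by_contra hne
  have hpow (n : ℕ) : toEnd k L M f ^ n ≠ 0 := fun hn ↦ hne ⟨n, hn⟩
  have hlie (n : ℕ) : ⁅h, toEnd k L M f ^ n⁆ = (-2 * n : k) • toEnd k L M f ^ n := by
    ext v
    rw [LieHom.lie_apply, lie_h_pow_toEnd_f_apply (R := k) t, LinearMap.smul_apply]
    module
  have hinj : Function.Injective fun n : ℕ ↦ (-2 * n : k) := fun a b hab ↦ by simpa using hab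
  refine Set.infinite_range_of_injective hinj
    ((toEnd k L (End k M) h).finite_hasEigenvalue.subset ?_)
  rintro _ ⟨n, rfl⟩
  exact End.hasEigenvalue_of_hasEigenvector ⟨End.mem_eigenspace_iff.mpr (hlie n), hpow n⟩

variable (k) in
theorem exists_pow_toEnd_f_ne_zero_and_succ_eq_zero (t : IsSl2Triple h e f) {v : M} (hv : v ≠ 0) :
    ∃ n : ℕ, (toEnd k L M f ^ n) v ≠ 0 ∧ (toEnd k L M f ^ (n + 1)) v = 0 := by
  obtain ⟨N, hN⟩ := isNilpotent_toEnd_f (k := k) (M := M) t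
  exact Nat.exists_not_and_succ_of_not_zero_of_exists (p := fun n ↦ (toEnd k L M f ^ n) v = 0)
    hv ⟨N, by rw [hN, LinearMap.zero_apply]⟩

theorem exists_nat_of_lie_e_eq_zero (t : IsSl2Triple h e f) {μ : k} {v : M}
    (hv : v ∈ (toEnd k L M h).maxGenEigenspace μ) (he : ⁅e, v⁆ = 0) (hv0 : v ≠ 0) :
    ∃ n : ℕ, μ = n ∧ (toEnd k L M f ^ n) v ≠ 0 ∧ (toEnd k L M f ^ n) (⁅h, v⁆ - μ • v) = 0 := by
  obtain ⟨n, hn, hn'⟩ := exists_pow_toEnd_f_ne_zero_and_succ_eq_zero k t hv0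
  have hker : (toEnd k L M f ^ n) (⁅h, v⁆ - (n : k) • v) = 0 := by
    have := lie_e_pow_succ_toEnd_f_apply (R := k) t v n
    rw [hn', lie_zero, he, map_zero, zero_add, eq_comm] at this
    exact (smul_eq_zero_iff_right n.cast_add_one_ne_zero).mp this
  have heig : (toEnd k L M f ^ n) v ∈ (toEnd k L M h).eigenspace (-n : k) := by
    rw [map_sub, map_smul, sub_eq_zero] at hker
    rw [End.mem_eigenspace_iff, toEnd_apply_apply, lie_h_pow_toEnd_f_apply (R := k) t, hker]
    module
  have hμ : μ = n := by
    by_contra hne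
    have hne' : (-n : k) ≠ μ - 2 * n := fun h' ↦ hne (by linear_combination -h')
    exact hn (Submodule.disjoint_def.mp
      ((toEnd k L M h).disjoint_genEigenspace hne' 1 ⊤) _ heig
      (pow_toEnd_f_mem_maxGenEigenspace t hv n))
  exact ⟨n, hμ, hn, hμ ▸ hker⟩

theorem mem_eigenspace_of_lie_e_eq_zero (t : IsSl2Triple h e f) {μ : k} {v : M}
    (hv : v ∈ (toEnd k L M h).maxGenEigenspace μ) (he : ⁅e, v⁆ = 0) :
    v ∈ (toEnd k L M h).eigenspace μ := by
  set u := ⁅h, v⁆ - μ • v with hu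
  suffices u = 0 from End.mem_eigenspace_iff.mpr (sub_eq_zero.mp this)
  by_contra hu0
  have hv0 : v ≠ 0 := by rintro rfl; simp [hu] at hu0
  have humem : u ∈ (toEnd k L M h).maxGenEigenspace μ :=
    Submodule.sub_mem _ (End.mapsTo_maxGenEigenspace_of_comm (Commute.refl _) μ hv)
      (Submodule.smul_mem _ _ hv)
  have heh : ⁅e, ⁅h, v⁆⁆ = 0 := by
    have := leibniz_lie h e v
    rw [he, lie_zero, t.lie_h_e_smul k, smul_lie, he, smul_zero, zero_add] at this
    exact this.symm
  have heu : ⁅e, u⁆ = 0 := by rw [hu, lie_sub, lie_smul, heh, he, smul_zero, sub_zero]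
  obtain ⟨n, rfl, -, hn⟩ := exists_nat_of_lie_e_eq_zero t hv he hv0
  obtain ⟨m, hm, hm', -⟩ := exists_nat_of_lie_e_eq_zero t humem heu hu0
  obtain rfl : n = m := Nat.cast_injective hm
  exact hm' hn

theorem eq_zero_of_lie_e_lie_f_eq_zero (t : IsSl2Triple h e f) {μ : k}
    (hμ : ∀ n : ℕ, μ ≠ -n) {v : M} (hv : v ∈ (toEnd k L M h).eigenspace μ)
    (hef : ⁅e, ⁅f, v⁆⁆ = 0) : v = 0 := by
  by_contra hv0
  obtain ⟨n, hn, hn'⟩ := exists_pow_toEnd_f_ne_zero_and_succ_eq_zero k t.symm hv0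
  have hpow : (toEnd k L M e ^ (n + 1)) ⁅f, v⁆ = 0 := by
    rw [pow_succ, End.mul_apply, toEnd_apply_apply, hef, map_zero]
  have hhv : ⁅-h, v⁆ - (n : k) • v = -(μ + n) • v := by
    rw [neg_lie, show ⁅h, v⁆ = μ • v from End.mem_eigenspace_iff.mp hv]; module
  have := lie_e_pow_succ_toEnd_f_apply (R := k) t.symm v n
  rw [hn', lie_zero, hpow, zero_add, hhv, map_smul, smul_smul, eq_comm] at this
  refine hn ((smul_eq_zero_iff_right (mul_ne_zero n.cast_add_one_ne_zero ?_)).mp this)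
  exact neg_ne_zero.mpr fun h' ↦ hμ n (eq_neg_of_add_eq_zero_left h')

theorem exists_lie_e_lie_f_eq (t : IsSl2Triple h e f) {μ : k} (hμ : ∀ n : ℕ, μ ≠ -n) {v : M}
    (hv : v ∈ (toEnd k L M h).eigenspace μ) :
    ∃ w ∈ (toEnd k L M h).eigenspace μ, ⁅e, ⁅f, w⁆⁆ = v := by
  let V := (toEnd k L M h).eigenspace μ
  have hmaps : ∀ w ∈ V, (toEnd k L M e ∘ₗ toEnd k L M f) w ∈ V := fun w hw ↦ by
    have := lie_e_mem_eigenspace t (lie_f_mem_eigenspace t hw)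
    rwa [sub_add_cancel] at this
  have hinj : Function.Injective ((toEnd k L M e ∘ₗ toEnd k L M f).restrict hmaps) := by
    rw [injective_iff_map_eq_zero]
    exact fun w hw ↦
      Subtype.ext (eq_zero_of_lie_e_lie_f_eq_zero t hμ w.2 (congrArg Subtype.val hw))
  obtain ⟨w, hw⟩ := LinearMap.injective_iff_surjective.mp hinj ⟨v, hv⟩
  exact ⟨w, w.2, congrArg Subtype.val hw⟩

theorem map_toEnd_e_eigenspace (t : IsSl2Triple h e f) {μ : k} (hμ : ∀ n : ℕ, μ + 2 ≠ -n) :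
    ((toEnd k L M h).eigenspace μ).map (toEnd k L M e) = (toEnd k L M h).eigenspace (μ + 2) := by
  refine le_antisymm (Submodule.map_le_iff_le_comap.mpr fun v hv ↦ lie_e_mem_eigenspace t hv) ?_
  intro v hv
  obtain ⟨w, hw, rfl⟩ := exists_lie_e_lie_f_eq t hμ hv
  exact ⟨⁅f, w⁆, by simpa using lie_f_mem_eigenspace t hw, rfl⟩

theorem mem_eigenspace_of_pow_toEnd_e_eq_zero (t : IsSl2Triple h e f) (n : ℕ) {μ : k}
    (hμ : ∀ m : ℕ, μ + 2 ≠ -m) {v : M} (hv : v ∈ (toEnd k L M h).maxGenEigenspace μ)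
    (hn : (toEnd k L M e ^ n) v = 0) : v ∈ (toEnd k L M h).eigenspace μ := by
  induction n generalizing μ v with
  | zero => simp_all
  | succ n ih =>
    have hμ' (m : ℕ) : μ + 2 + 2 ≠ -m := fun h' ↦
      hμ (m + 2) (by push_cast; linear_combination h')
    have hev : ⁅e, v⁆ ∈ (toEnd k L M h).eigenspace (μ + 2) :=
      ih hμ' (lie_e_mem_maxGenEigenspace t hv) (by rwa [pow_succ] at hn)
    rw [← map_toEnd_e_eigenspace t hμ] at hev
    obtain ⟨w, hw, hwv : ⁅e, w⁆ = ⁅e, v⁆⟩ := hev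
    have hdiff : v - w ∈ (toEnd k L M h).eigenspace μ :=
      mem_eigenspace_of_lie_e_eq_zero t
        (Submodule.sub_mem _ hv (End.eigenspace_le_maxGenEigenspace hw))
        (by rw [lie_sub, hwv, sub_self])
    simpa using Submodule.add_mem _ hdiff hw

theorem maxGenEigenspace_eq_eigenspace (t : IsSl2Triple h e f) (μ : k) :
    (toEnd k L M h).maxGenEigenspace μ = (toEnd k L M h).eigenspace μ := by
  refine le_antisymm (fun v hv ↦ ?_) End.eigenspace_le_maxGenEigenspace
  by_cases hμ : ∀ n : ℕ, μ + 2 ≠ -n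
  · obtain ⟨N, hN⟩ := isNilpotent_toEnd_f (k := k) (M := M) t.symm
    exact mem_eigenspace_of_pow_toEnd_e_eq_zero t N hμ hv (by rw [hN, LinearMap.zero_apply])
  -- The opposite triple `(-h, f, e)` covers the remaining weights, which are all at most `-2`.
  · push Not at hμ
    obtain ⟨n, hn⟩ := hμ
    have hμ' (m : ℕ) : -μ + 2 ≠ -m := fun h' ↦
      (n + m + 4).cast_ne_zero (R := k).mpr (by omega) (by push_cast; linear_combination h' + hn)
    have hv' : v ∈ (toEnd k L M (-h)).maxGenEigenspace (-μ) := by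
      rw [End.mem_maxGenEigenspace] at hv ⊢
      obtain ⟨m, hm⟩ := hv
      refine ⟨m, ?_⟩
      rw [map_neg, neg_smul, neg_sub_neg, ← neg_sub, neg_pow]
      simp [hm]
    obtain ⟨N, hN⟩ := isNilpotent_toEnd_f (k := k) (M := M) t
    have := mem_eigenspace_of_pow_toEnd_e_eq_zero t.symm N hμ' hv'
      (by rw [hN, LinearMap.zero_apply])
    simpa [End.mem_eigenspace_iff] using this

theorem map_toEnd_e_biSup_Ici_eigenspace (t : IsSl2Triple h e f) {n : ℤ} (hn : -1 ≤ n) :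
    (⨆ i ∈ Set.Ici n, (toEnd k L M h).eigenspace (i : k)).map (toEnd k L M e) =
      ⨆ i ∈ Set.Ici (n + 2), (toEnd k L M h).eigenspace (i : k) := by
  have hmap {i : ℤ} (hi : n ≤ i) : ((toEnd k L M h).eigenspace (i : k)).map (toEnd k L M e) =
      (toEnd k L M h).eigenspace ((i + 2 : ℤ) : k) := by
    push_cast
    refine map_toEnd_e_eigenspace t fun m ↦ ?_
    norm_cast
    omega
  simp only [Submodule.map_iSup]
  refine le_antisymm (iSup₂_le fun i hi ↦ ?_) (iSup₂_le fun i hi ↦ ?_) <;>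
    rw [Set.mem_Ici] at hi
  · rw [hmap hi]
    exact le_iSup₂_of_le (i + 2) (add_le_add_left hi 2) le_rfl
  · have hi' : n ≤ i - 2 := by omega
    refine le_iSup₂_of_le (i - 2) hi' ?_
    rw [hmap hi', sub_add_cancel]

theorem finrank_ker_inf_biSup_eigenspace (t : IsSl2Triple h e f) :
    finrank k (LinearMap.ker (toEnd k L M e) ⊓
        ⨆ i ∈ Set.Ici (1 : ℤ), (toEnd k L M h).eigenspace (i : k) : Submodule k M) =
      finrank k ((toEnd k L M h).eigenspace (1 : k)) +
        finrank k ((toEnd k L M h).eigenspace (2 : k)) := by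
  have hind : iSupIndep fun i : ℤ ↦ (toEnd k L M h).eigenspace (i : k) :=
    (toEnd k L M h).eigenspaces_iSupIndep.comp Int.cast_injective
  have hpos : Set.Ici (1 : ℤ) = insert 1 (insert 2 (Set.Ici (1 + 2))) := by
    ext i
    simp only [Set.mem_insert_iff, Set.mem_Ici]
    omega
  have hsplit := finrank_map_add_finrank_ker_inf (toEnd k L M e)
    (⨆ i ∈ Set.Ici (1 : ℤ), (toEnd k L M h).eigenspace (i : k))
  rw [map_toEnd_e_biSup_Ici_eigenspace t (by omega), hpos,
    finrank_biSup_insert hind (by simp), finrank_biSup_insert hind (by simp), ← hpos,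
    Int.cast_one, Int.cast_two] at hsplit
  omega

end Field

section InvariantForm

variable {k L : Type*} [Field k] [CharZero k] [LieRing L] [LieAlgebra k L] [FiniteDimensional k L]
  {Φ : LinearMap.BilinForm k L} {h e f : L}

theorem eq_zero_of_forall_apply_eigenspace_eq_zero (hΦ : Φ.SeparatingLeft) (hinv : Φ.lieInvariant L)
    (t : IsSl2Triple h e f) {μ : k} {z : L} (hz : z ∈ (ad k L h).eigenspace (-μ))
    (horth : ∀ y ∈ (ad k L h).eigenspace μ, Φ z y = 0) : z = 0 := by
  refine hΦ z fun w ↦ ?_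
  have hw : w ∈ (ad k L h).eigenspace μ ⊔ LinearMap.range (ad k L h - μ • 1) := by
    have hcompl : IsCompl ((ad k L h).eigenspace μ) (LinearMap.range (ad k L h - μ • 1)) :=
      isCompl_eigenspace_range (maxGenEigenspace_eq_eigenspace t μ)
    exact hcompl.sup_eq_top ▸ Submodule.mem_top
  obtain ⟨y, hy, _, ⟨x, rfl⟩, rfl⟩ := Submodule.mem_sup.mp hw
  have hx : Φ z ⁅h, x⁆ = μ • Φ z x := by
    have hzh : ⁅h, z⁆ = -μ • z := End.mem_eigenspace_iff.mp hz
    rw [← neg_inj, ← hinv, hzh, map_smul, LinearMap.smul_apply, neg_smul]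
  simp [horth y hy, hx]

theorem even_finrank_eigenspace_one (hΦ : Φ.SeparatingLeft) (hinv : Φ.lieInvariant L)
    (t : IsSl2Triple h e f) : Even (finrank k ((ad k L h).eigenspace (1 : k))) := by
  let V := (ad k L h).eigenspace (1 : k)
  let ω : LinearMap.BilinForm k V := Φ.compl₁₂ (ad k L f ∘ₗ V.subtype) V.subtype
  have hω (x y : V) : ω x y = Φ ⁅f, (x : L)⁆ y := rfl
  have halt : ω.IsAlt := fun x ↦ by
    rw [hω, ← lie_skew, map_neg, LinearMap.neg_apply, hinv, lie_self, map_zero, neg_zero, neg_zero]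
  have hsep : ω.SeparatingLeft := fun x hx ↦ by
    have hfx : ⁅f, (x : L)⁆ ∈ (ad k L h).eigenspace (-1 : k) := by
      have hsub : (1 : k) - 2 = -1 := by norm_num
      exact hsub ▸ lie_f_mem_eigenspace t x.2
    have hfx0 : ⁅f, (x : L)⁆ = 0 :=
      eq_zero_of_forall_apply_eigenspace_eq_zero hΦ hinv t hfx fun y hy ↦ hx ⟨y, hy⟩
    have hone (n : ℕ) : (1 : k) ≠ -n := fun h' ↦
      n.cast_add_one_ne_zero (R := k) (by linear_combination h')
    exact Subtype.ext (eq_zero_of_lie_e_lie_f_eq_zero t hone x.2 (by rw [hfx0, lie_zero]))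
  exact even_finrank_of_isAlt_of_separatingLeft halt hsep

end InvariantForm

end Sl2Triple

theorem stmt_2_general {k : Type*} [Field k] [CharZero k]
    {L : Type*} [LieRing L] [LieAlgebra k L] [FiniteDimensional k L]
    {Φ : LinearMap.BilinForm k L} (hΦ : Φ.SeparatingLeft) (hinv : Φ.lieInvariant L)
    {h e f : L} (ht : IsSl2Triple h e f)
    (hdiv : ∃ e' f' : L, IsSl2Triple ((2⁻¹ : k) • h) e' f') :
    Even (finrank k ((LinearMap.ker (ad k L e) ⊓
      ⨆ i ∈ Set.Ici (1 : ℤ), (ad k L h).eigenspace ((i : ℤ) : k) : Submodule k L))) := by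
  obtain ⟨e', f', ht'⟩ := hdiv
  have hhalf : (ad k L ((2⁻¹ : k) • h)).eigenspace 1 = (ad k L h).eigenspace 2 := by
    ext x
    simp only [End.mem_eigenspace_iff, ad_apply, smul_lie, one_smul]
    exact inv_smul_eq_iff₀ two_ne_zero
  have hone := Sl2Triple.even_finrank_eigenspace_one hΦ hinv ht
  have htwo := Sl2Triple.even_finrank_eigenspace_one hΦ hinv ht'
  rw [hhalf] at htwo
  exact Sl2Triple.finrank_ker_inf_biSup_eigenspace (k := k) (M := L) ht ▸ hone.add htwo

/-- If the Killing form of a finite-dimensional char-0 Lie algebra is nondegenerate,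
`(h,e,f)` is an sl₂-triple with `e` even, and `(h/2, e', f')` is also an sl₂-triple,
then `dim 𝔤^e_nil` is even. -/
theorem stmt_2 {k : Type*} [Field k] [CharZero k]
    {L : Type*} [LieRing L] [LieAlgebra k L] [FiniteDimensional k L]
    (hKilling : (killingForm k L).Nondegenerate)
    {h e f : L} (ht : IsSl2Triple h e f)
    (heven : ∀ i : ℤ, Odd i → (ad k L h).eigenspace ((i : ℤ) : k) = ⊥)
    (hdiv : ∃ e' f' : L, IsSl2Triple ((2⁻¹ : k) • h) e' f') :
    Even (Module.finrank k ((LinearMap.ker (ad k L e) ⊓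
      ⨆ i ∈ Set.Ici (1 : ℤ), (ad k L h).eigenspace ((i : ℤ) : k) : Submodule k L))) :=
  stmt_2_general hKilling.1 (LieModule.traceForm_lieInvariant k L L) ht hdiv
end

section
/- Let 𝔤 be a finite-dimensional Lie algebra over a field of characteristic 0 whose Killing form κ is nondegenerate, let (h,e,f) be an sl₂-triple in 𝔤, and let x ∈ 𝔤 satisfy ⁅h,x⁆ = 4x. Then h lies in the image of ad x (i.e., there exists z ∈ 𝔤 with ⁅x,z⁆ = h) if and only if κ(h,y) = 0 for every y ∈ 𝔤 with ⁅x,y⁆ = 0 and ⁅h,y⁆ = 0. -/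
open LieAlgebra Module

/-!
For an invariant nondegenerate form the image of `x` is the orthogonal complement of its kernel `K`.
As `⁅h, x⁆` is a multiple of `x`, the element `h` acts on `K`; if `h` has no Jordan block of size
two at the eigenvalue `0`, then `K` is spanned by `K ∩ ker h` and `h K`. A vector `w` killed by `h`
is orthogonal to `h K`, so it is orthogonal to `K` as soon as it is orthogonal to `K ∩ ker h`.

The `h` of an `sl₂`-triple has no Jordan blocks: let `h m = μ m + w` and `h w = μ w`. If `e m = 0`,
then `w = 0` by comparing the strings `fⁿ m` and `fⁿ w`. In general, induct on `r` with
`e ^ (r + 1) m = 0`. The vector `e ^ r m` has highest weight `ν = μ + 2 r`, so the Casimir operator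
minus its eigenvalue for `ν` lowers `r`, and by induction it kills `w`. Hence the highest weight
vector in the string `eʲ w` also has weight `ν`, which is absurd because `e ^ r w = 0`.
-/

section AssociativeAlgebra

attribute [local instance] LieRing.ofAssociativeRing

variable {k A : Type*} [Ring A]

lemma lie_pow_of_lie_eq_smul [CommRing k] [Algebra k A] {a b : A} {c : k} (hab : ⁅a, b⁆ = c • b)
    (n : ℕ) : ⁅a, b ^ n⁆ = (c * n) • b ^ n := by
  induction n with
  | zero => simp [Ring.lie_def]
  | succ n ih =>
    rw [Ring.lie_def] at hab ih ⊢
    calc a * b ^ (n + 1) - b ^ (n + 1) * a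
        = (a * b ^ n - b ^ n * a) * b + b ^ n * (a * b - b * a) := by
          rw [pow_succ]; noncomm_ring
      _ = (c * (n + 1 : ℕ)) • b ^ (n + 1) := by
          rw [ih, hab, smul_mul_assoc, mul_smul_comm, ← pow_succ, ← add_smul]
          push_cast
          ring_nf

lemma isNilpotent_of_lie_eq_smul [Field k] [CharZero k] [Algebra k A] [FiniteDimensional k A]
    {a b : A} {c : k} (hc : c ≠ 0) (hab : ⁅a, b⁆ = c • b) : IsNilpotent b := by
  by_contra hb
  have hasEigenvalue (n : ℕ) : (ad k A a).HasEigenvalue (c * n) :=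
    End.hasEigenvalue_of_hasEigenvector (x := b ^ n)
      ⟨End.mem_eigenspace_iff.mpr (lie_pow_of_lie_eq_smul hab n), fun h ↦ hb ⟨n, h⟩⟩
  have injective : Function.Injective fun n : ℕ ↦ c * (n : k) :=
    (mul_right_injective₀ hc).comp Nat.cast_injective
  exact Set.infinite_of_injective_forall_mem injective hasEigenvalue
    (ad k A a).finite_hasEigenvalue

end AssociativeAlgebra

section JordanPair

variable {k L M : Type*} [CommRing k] [LieRing L] [AddCommGroup M] [Module k M] [LieRingModule L M]

/-- `(m, w)` is a Jordan chain of length at most two for the action of `h` with eigenvalue `μ`; a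
Jordan block of size two is ruled out by showing `w = 0`. Both `m` and `w` may vanish, so that
operators normalized by `h` map such pairs to such pairs. -/
structure IsJordanPair (h : L) (μ : k) (m w : M) : Prop where
  lie_left : ⁅h, m⁆ = μ • m + w
  lie_right : ⁅h, w⁆ = μ • w

namespace IsJordanPair

variable {h : L} {μ : k} {m w : M}

lemma right_eq_zero_of_left_eq_zero (hmw : IsJordanPair h μ m w) (hm : m = 0) : w = 0 := by
  simpa [hm] using hmw.lie_left.symm

variable [LieAlgebra k L] [LieModule k L M]

lemma map_of_lie_eq_smul (hmw : IsJordanPair h μ m w) {φ : End k M} {d : k}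
    (hφ : ⁅LieModule.toEnd k L M h, φ⁆ = d • φ) : IsJordanPair h (μ + d) (φ m) (φ w) := by
  have lie_apply (v : M) : ⁅h, φ v⁆ = φ ⁅h, v⁆ + d • φ v := by
    have := LinearMap.congr_fun hφ v
    simpa [Ring.lie_def, sub_eq_iff_eq_add'] using this
  constructor
  · rw [lie_apply, hmw.lie_left, map_add, map_smul]
    module
  · rw [lie_apply, hmw.lie_right, map_smul]
    module

lemma map_of_commute (hmw : IsJordanPair h μ m w) {φ : End k M}
    (hφ : Commute (LieModule.toEnd k L M h) φ) : IsJordanPair h μ (φ m) (φ w) := by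
  simpa using hmw.map_of_lie_eq_smul (d := 0) (by rw [hφ.lie_eq, zero_smul])

end IsJordanPair

end JordanPair

section Sl2Triple

variable {k L M : Type*} [CommRing k] [LieRing L] [LieAlgebra k L]
  [AddCommGroup M] [Module k M] [LieRingModule L M] [LieModule k L M] {h e f : L}

lemma lie_toEnd_h_toEnd_e (ht : IsSl2Triple h e f) :
    ⁅LieModule.toEnd k L M h, LieModule.toEnd k L M e⁆ = (2 : k) • LieModule.toEnd k L M e := by
  simpa only [LieHom.map_lie, map_smul] using congr(LieModule.toEnd k L M $(ht.lie_h_e_smul k))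

lemma IsJordanPair.pow_toEnd_e {μ : k} {m w : M} (hmw : IsJordanPair h μ m w)
    (ht : IsSl2Triple h e f) (n : ℕ) :
    IsJordanPair h (μ + 2 * n) ((LieModule.toEnd k L M e ^ n) m)
      ((LieModule.toEnd k L M e ^ n) w) :=
  hmw.map_of_lie_eq_smul (lie_pow_of_lie_eq_smul (lie_toEnd_h_toEnd_e ht) n)

lemma lie_e_pow_succ_toEnd_f_apply (ht : IsSl2Triple h e f) (n : ℕ) (m : M) :
    ⁅e, (LieModule.toEnd k L M f ^ (n + 1)) m⁆ =
      (LieModule.toEnd k L M f ^ (n + 1)) ⁅e, m⁆ +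
        (n + 1 : k) • (LieModule.toEnd k L M f ^ n) (⁅h, m⁆ - (n : k) • m) := by
  induction n generalizing m with
  | zero => simp [leibniz_lie e f m, ht.lie_e_f, add_comm]
  | succ n ih =>
    have lie_e_f : ⁅e, ⁅f, m⁆⁆ = ⁅f, ⁅e, m⁆⁆ + ⁅h, m⁆ := by
      rw [leibniz_lie, ht.lie_e_f, add_comm]
    have lie_h_f : ⁅h, ⁅f, m⁆⁆ = ⁅f, ⁅h, m⁆⁆ - (2 : k) • ⁅f, m⁆ := by
      rw [leibniz_lie, ht.lie_lie_smul_f k, neg_lie, smul_lie, neg_add_eq_sub]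
    have pow_succ_apply (i : ℕ) (v : M) : (LieModule.toEnd k L M f ^ (i + 1)) v =
        (LieModule.toEnd k L M f ^ i) ⁅f, v⁆ := by
      rw [pow_succ, Module.End.mul_apply, LieModule.toEnd_apply_apply]
    rw [pow_succ_apply, ih, lie_e_f, lie_h_f]
    simp only [pow_succ_apply, lie_sub, lie_smul, lie_add, map_add, map_sub, map_smul]
    push_cast
    module

variable (k M) in
/-- The action on `M` of the Casimir element `h² + 2ef + 2fe` of an `sl₂`-triple, normalized to act
by `μ (μ + 2)` on a primitive vector of weight `μ`. -/
def sl2Casimir (h e f : L) : End k M :=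
  LieModule.toEnd k L M h * LieModule.toEnd k L M h +
    2 * (LieModule.toEnd k L M e * LieModule.toEnd k L M f) +
    2 * (LieModule.toEnd k L M f * LieModule.toEnd k L M e)

namespace sl2Casimir

lemma commute_toEnd_h (ht : IsSl2Triple h e f) :
    Commute (LieModule.toEnd k L M h) (sl2Casimir k M h e f) := by
  have lie_h_e := congr(LieModule.toEnd k L M $(ht.lie_h_e_nsmul))
  have lie_h_f := congr(LieModule.toEnd k L M $(ht.lie_h_f_nsmul))
  simp only [LieHom.map_lie, Ring.lie_def, map_neg, map_nsmul] at lie_h_e lie_h_f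
  rw [commute_iff_lie_eq, Ring.lie_def, sl2Casimir]
  set E := LieModule.toEnd k L M e
  set F := LieModule.toEnd k L M f
  linear_combination (norm := noncomm_ring) 2 * lie_h_e * F + 2 * E * lie_h_f +
    2 * lie_h_f * E + 2 * F * lie_h_e

lemma commute_toEnd_e (ht : IsSl2Triple h e f) :
    Commute (LieModule.toEnd k L M e) (sl2Casimir k M h e f) := by
  have lie_h_e := congr(LieModule.toEnd k L M $(ht.lie_h_e_nsmul))
  have lie_e_f := congr(LieModule.toEnd k L M $(ht.lie_e_f))
  simp only [LieHom.map_lie, Ring.lie_def, map_nsmul] at lie_h_e lie_e_f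
  rw [commute_iff_lie_eq, Ring.lie_def, sl2Casimir]
  set E := LieModule.toEnd k L M e
  set H := LieModule.toEnd k L M h
  linear_combination (norm := noncomm_ring) -(H * lie_h_e) - lie_h_e * H + 2 * lie_e_f * E +
    2 * E * lie_e_f

lemma apply_pow_toEnd_e (ht : IsSl2Triple h e f) (n : ℕ) (m : M) :
    sl2Casimir k M h e f ((LieModule.toEnd k L M e ^ n) m) =
      (LieModule.toEnd k L M e ^ n) (sl2Casimir k M h e f m) :=
  LinearMap.congr_fun ((commute_toEnd_e ht).pow_left n).eq.symm m

lemma apply_eq_smul (ht : IsSl2Triple h e f) {m : M} {μ : k} (he : ⁅e, m⁆ = 0)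
    (hh : ⁅h, m⁆ = μ • m) : sl2Casimir k M h e f m = (μ * (μ + 2)) • m := by
  have lie_e_f : ⁅e, ⁅f, m⁆⁆ = μ • m := by
    rw [leibniz_lie, ht.lie_e_f, he, lie_zero, add_zero, hh]
  simp only [sl2Casimir, two_mul, LinearMap.add_apply, Module.End.mul_apply,
    LieModule.toEnd_apply_apply, lie_e_f, he, hh, lie_smul, lie_zero]
  module

end sl2Casimir

end Sl2Triple

section Semisimplicity

variable {k L M : Type*} [Field k] [CharZero k] [LieRing L] [LieAlgebra k L]
  [AddCommGroup M] [Module k M] [LieRingModule L M] [LieModule k L M] {h e f : L}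

namespace IsJordanPair

variable {μ : k} {m w : M}

lemma right_eq_zero_of_pow_toEnd_f_eq_zero (hmw : IsJordanPair h μ m w) (ht : IsSl2Triple h e f)
    (he : ⁅e, m⁆ = 0) {n : ℕ} (hf : (LieModule.toEnd k L M f ^ n) m = 0) : w = 0 := by
  induction n generalizing m w with
  | zero => exact hmw.right_eq_zero_of_left_eq_zero (by simpa using hf)
  | succ n ih =>
    let φ : End k M := LieModule.toEnd k L M h - algebraMap k (End k M) n
    have φ_apply (v : M) : φ v = ⁅h, v⁆ - (n : k) • v := rfl
    have pow_f_φ : (LieModule.toEnd k L M f ^ n) (φ m) = 0 := by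
      have := lie_e_pow_succ_toEnd_f_apply (k := k) ht n m
      rw [hf, he, lie_zero, map_zero, zero_add, eq_comm, smul_eq_zero] at this
      exact this.resolve_left n.cast_add_one_ne_zero
    have lie_e_φ : ⁅e, φ m⁆ = 0 := by
      rw [φ_apply, lie_sub, lie_smul, he, leibniz_lie, ← lie_skew, ht.lie_h_e_smul k, neg_lie,
        smul_lie, he]
      simp
    have hφ : Commute (LieModule.toEnd k L M h) φ :=
      (Commute.refl _).sub_right (Algebra.commutes _ _).symm
    have φ_w : (μ - n) • w = 0 := by
      simpa [φ_apply, hmw.lie_right, sub_smul] using ih (hmw.map_of_commute hφ) lie_e_φ pow_f_φ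
    by_contra hw
    have hμ : μ = n := sub_eq_zero.mp ((smul_eq_zero_iff_left hw).mp φ_w)
    have lie_e_w : ⁅e, w⁆ = 0 := by
      simpa using (hmw.pow_toEnd_e ht 1).right_eq_zero_of_left_eq_zero (by simpa using he)
    have primitive : ht.HasPrimitiveVectorWith w μ := ⟨hw, hmw.lie_right, lie_e_w⟩
    refine primitive.pow_toEnd_f_ne_zero_of_eq_nat hμ le_rfl ?_
    simpa [φ_apply, hmw.lie_left, hμ] using pow_f_φ

end IsJordanPair

variable [FiniteDimensional k M]

variable (k M) in
lemma isNilpotent_toEnd_e (ht : IsSl2Triple h e f) : IsNilpotent (LieModule.toEnd k L M e) :=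
  isNilpotent_of_lie_eq_smul two_ne_zero (lie_toEnd_h_toEnd_e ht)

lemma IsJordanPair.right_eq_zero_of_lie_e_eq_zero {μ : k} {m w : M} (hmw : IsJordanPair h μ m w)
    (ht : IsSl2Triple h e f) (he : ⁅e, m⁆ = 0) : w = 0 := by
  obtain ⟨n, hn⟩ := isNilpotent_toEnd_e k M ht.symm
  exact hmw.right_eq_zero_of_pow_toEnd_f_eq_zero ht he (n := n) (by simp [hn])

lemma exists_hasPrimitiveVectorWith_pow_toEnd_e (ht : IsSl2Triple h e f) {μ : k} {m : M}
    (hm : m ≠ 0) (hμ : ⁅h, m⁆ = μ • m) :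
    ∃ j : ℕ, ht.HasPrimitiveVectorWith ((LieModule.toEnd k L M e ^ j) m) (μ + 2 * j) := by
  obtain ⟨n, hn⟩ := isNilpotent_toEnd_e k M ht
  obtain ⟨j, hj, hj'⟩ := Nat.exists_not_and_succ_of_not_zero_of_exists
    (p := fun j ↦ (LieModule.toEnd k L M e ^ j) m = 0) (by simpa using hm) ⟨n, by simp [hn]⟩
  exact ⟨j, hj, ht.lie_h_pow_toEnd_e hμ j, by rw [IsSl2Triple.lie_e_pow_toEnd_e, hj']⟩

lemma weight_eq_of_mul_add_two_eq (ht : IsSl2Triple h e f) {v v' : M} {μ μ' : k}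
    (hv : ht.HasPrimitiveVectorWith v μ) (hv' : ht.HasPrimitiveVectorWith v' μ')
    (hμ : μ * (μ + 2) = μ' * (μ' + 2)) : μ = μ' := by
  obtain ⟨a, rfl⟩ := hv.exists_nat
  obtain ⟨b, rfl⟩ := hv'.exists_nat
  have hab : a * (a + 2) = b * (b + 2) := by exact_mod_cast hμ
  rw [show a = b by nlinarith]

lemma exists_pow_toEnd_e_ne_zero_of_sl2Casimir_apply_eq_smul (ht : IsSl2Triple h e f)
    {v w : M} {μ ν : k} (hv : ht.HasPrimitiveVectorWith v ν) (hw : w ≠ 0) (hμ : ⁅h, w⁆ = μ • w)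
    (hC : sl2Casimir k M h e f w = (ν * (ν + 2)) • w) :
    ∃ j : ℕ, (LieModule.toEnd k L M e ^ j) w ≠ 0 ∧ μ + 2 * j = ν := by
  obtain ⟨j, hj⟩ := exists_hasPrimitiveVectorWith_pow_toEnd_e ht hw hμ
  refine ⟨j, hj.ne_zero, weight_eq_of_mul_add_two_eq ht hj hv (smul_left_injective k hj.ne_zero ?_)⟩
  simp only
  rw [← sl2Casimir.apply_eq_smul ht hj.lie_e hj.lie_h, sl2Casimir.apply_pow_toEnd_e ht, hC,
    map_smul]

namespace IsJordanPair

variable {μ : k} {m w : M}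

lemma right_eq_zero_of_pow_toEnd_e_eq_zero (hmw : IsJordanPair h μ m w) (ht : IsSl2Triple h e f)
    {r : ℕ} (hr : (LieModule.toEnd k L M e ^ r) m = 0) : w = 0 := by
  induction r generalizing m w with
  | zero => exact hmw.right_eq_zero_of_left_eq_zero (by simpa using hr)
  | succ r ih =>
    by_cases hm : (LieModule.toEnd k L M e ^ r) m = 0
    · exact ih hmw hm
    have lie_e : ⁅e, (LieModule.toEnd k L M e ^ r) m⁆ = 0 := by
      rw [IsSl2Triple.lie_e_pow_toEnd_e, hr]
    have pow_e_w := (hmw.pow_toEnd_e ht r).right_eq_zero_of_lie_e_eq_zero ht lie_e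
    obtain ⟨ν, hν⟩ : ∃ ν, ν = μ + 2 * (r : k) := ⟨_, rfl⟩
    have primitive : ht.HasPrimitiveVectorWith ((LieModule.toEnd k L M e ^ r) m) ν :=
      ⟨hm, by simpa [pow_e_w, hν] using (hmw.pow_toEnd_e ht r).lie_left, lie_e⟩
    let φ : End k M := sl2Casimir k M h e f - algebraMap k (End k M) (ν * (ν + 2))
    have φ_apply (v : M) : φ v = sl2Casimir k M h e f v - (ν * (ν + 2)) • v := rfl
    have hφ : Commute (LieModule.toEnd k L M h) φ :=
      (sl2Casimir.commute_toEnd_h ht).sub_right (Algebra.commutes _ _).symm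
    have pow_e_φ_m : (LieModule.toEnd k L M e ^ r) (φ m) = 0 := by
      rw [φ_apply, map_sub, map_smul, ← sl2Casimir.apply_pow_toEnd_e ht,
        sl2Casimir.apply_eq_smul ht lie_e primitive.lie_h, sub_self]
    have casimir_w : sl2Casimir k M h e f w = (ν * (ν + 2)) • w :=
      sub_eq_zero.mp (ih (hmw.map_of_commute hφ) pow_e_φ_m)
    by_contra hw
    obtain ⟨j, hj, hjν⟩ :=
      exists_pow_toEnd_e_ne_zero_of_sl2Casimir_apply_eq_smul ht primitive hw hmw.lie_right casimir_w
    obtain rfl : j = r := by simpa [hν] using hjν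
    exact hj pow_e_w

lemma right_eq_zero (hmw : IsJordanPair h μ m w) (ht : IsSl2Triple h e f) : w = 0 := by
  obtain ⟨r, hr⟩ := isNilpotent_toEnd_e k M ht
  exact hmw.right_eq_zero_of_pow_toEnd_e_eq_zero ht (r := r) (by simp [hr])

end IsJordanPair

variable (k M) in
lemma disjoint_ker_range_toEnd_h (ht : IsSl2Triple h e f) :
    Disjoint (LinearMap.ker (LieModule.toEnd k L M h))
      (LinearMap.range (LieModule.toEnd k L M h)) := by
  rw [Submodule.disjoint_def]
  rintro _ hv ⟨v, rfl⟩
  have pair : IsJordanPair h (0 : k) v ⁅h, v⁆ := ⟨by simp, by simpa using hv⟩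
  exact pair.right_eq_zero ht

end Semisimplicity

section InvariantForm

variable {k L M : Type*} [Field k] [LieRing L] [LieAlgebra k L]
  [AddCommGroup M] [Module k M] [LieRingModule L M] [LieModule k L M]
  {Φ : LinearMap.BilinForm k M}

lemma orthogonal_range_toEnd (hnondeg : Φ.Nondegenerate) (hinv : Φ.lieInvariant L) (x : L) :
    Φ.orthogonal (LinearMap.range (LieModule.toEnd k L M x)) =
      LinearMap.ker (LieModule.toEnd k L M x) := by
  ext y
  have apply_lie_eq_zero_iff (z : M) : Φ ⁅x, z⁆ y = 0 ↔ Φ z ⁅x, y⁆ = 0 := by rw [hinv, neg_eq_zero]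
  simp only [LinearMap.BilinForm.mem_orthogonal_iff, LinearMap.mem_range,
    forall_exists_index, forall_apply_eq_imp_iff, LieModule.toEnd_apply_apply,
    apply_lie_eq_zero_iff, LinearMap.mem_ker]
  exact ⟨hnondeg.2 _, fun hy z ↦ by rw [hy, map_zero]⟩

lemma range_toEnd_eq_orthogonal_ker [FiniteDimensional k M] (hrefl : Φ.IsRefl)
    (hnondeg : Φ.Nondegenerate) (hinv : Φ.lieInvariant L) (x : L) :
    LinearMap.range (LieModule.toEnd k L M x) =
      Φ.orthogonal (LinearMap.ker (LieModule.toEnd k L M x)) := by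
  rw [← orthogonal_range_toEnd hnondeg hinv,
    LinearMap.BilinForm.orthogonal_orthogonal hnondeg hrefl]

end InvariantForm

lemma le_inf_ker_sup_map_of_disjoint_ker_range {k V : Type*} [Field k] [AddCommGroup V] [Module k V]
    {T : End k V} (hT : Disjoint (LinearMap.ker T) (LinearMap.range T)) {K : Submodule k V}
    [FiniteDimensional k K] (hK : K ≤ K.comap T) : K ≤ K ⊓ LinearMap.ker T ⊔ K.map T := by
  let S : End k K := T.restrict hK
  have disjoint : Disjoint (LinearMap.ker S) (LinearMap.range S) := by
    rw [Submodule.disjoint_def] at hT ⊢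
    rintro _ hu ⟨v, rfl⟩
    exact Subtype.ext (hT _ congr(($hu : V)) ⟨v, rfl⟩)
  have sup_eq_top : LinearMap.ker S ⊔ LinearMap.range S = ⊤ :=
    Submodule.eq_top_of_disjoint _ _ (by rw [add_comm, S.finrank_range_add_finrank_ker]) disjoint
  intro y hy
  obtain ⟨a, ha, _, ⟨b, rfl⟩, hab⟩ :=
    Submodule.mem_sup.mp (sup_eq_top ▸ Submodule.mem_top : (⟨y, hy⟩ : K) ∈ _)
  have hy_eq : a + T b = y := congr(($hab : V))
  rw [← hy_eq]
  exact Submodule.add_mem_sup ⟨a.2, congr(($ha : V))⟩ ⟨b, b.2, rfl⟩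

theorem stmt_5_general {k L M : Type*} [Field k] [LieRing L] [LieAlgebra k L]
    [AddCommGroup M] [Module k M] [LieRingModule L M] [LieModule k L M] [FiniteDimensional k M]
    {Φ : LinearMap.BilinForm k M} (hrefl : Φ.IsRefl) (hnondeg : Φ.Nondegenerate)
    (hinv : Φ.lieInvariant L) {h x : L}
    (hh : Disjoint (LinearMap.ker (LieModule.toEnd k L M h))
      (LinearMap.range (LieModule.toEnd k L M h)))
    {c : k} (hx : ⁅h, x⁆ = c • x) {w : M} (hw : ⁅h, w⁆ = 0) :
    (∃ z : M, ⁅x, z⁆ = w) ↔ ∀ y : M, ⁅x, y⁆ = 0 → ⁅h, y⁆ = 0 → Φ w y = 0 := by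
  set K := LinearMap.ker (LieModule.toEnd k L M x)
  have mem_iff : (∃ z : M, ⁅x, z⁆ = w) ↔ K ≤ LinearMap.ker (Φ w) := by
    change w ∈ LinearMap.range (LieModule.toEnd k L M x) ↔ _
    rw [range_toEnd_eq_orthogonal_ker hrefl hnondeg hinv]
    exact forall₂_congr fun _ _ ↦ ⟨hrefl _ _, hrefl _ _⟩
  have invariant : K ≤ K.comap (LieModule.toEnd k L M h) := fun y (hy : ⁅x, y⁆ = 0) ↦ by
    change ⁅x, ⁅h, y⁆⁆ = 0
    rw [leibniz_lie, ← lie_skew, hx, neg_lie, smul_lie, hy, smul_zero, neg_zero, lie_zero, add_zero]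
  have map_le : K.map (LieModule.toEnd k L M h) ≤ LinearMap.ker (Φ w) := by
    rintro _ ⟨b, -, rfl⟩
    change Φ w ⁅h, b⁆ = 0
    rw [← neg_eq_zero, ← hinv, hw, map_zero, LinearMap.zero_apply]
  rw [mem_iff]
  refine ⟨fun hK y hxy _ ↦ hK hxy, fun hK ↦ ?_⟩
  exact (le_inf_ker_sup_map_of_disjoint_ker_range hh invariant).trans
    (sup_le (fun y hy ↦ hK y hy.1 hy.2) map_le)

/-- Let `𝔤` have nondegenerate Killing form, `(h,e,f)` be an sl₂-triple, and `x` satisfy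
`⁅h,x⁆ = 4x`.  Then `h ∈ Im(ad x)` iff `κ(h,y) = 0` for all `y` with `⁅x,y⁆ = 0` and
`⁅h,y⁆ = 0`. -/
theorem stmt_5 {k : Type*} [Field k] [CharZero k]
    {L : Type*} [LieRing L] [LieAlgebra k L] [FiniteDimensional k L]
    (hKilling : (killingForm k L).Nondegenerate)
    {h e f : L} (ht : IsSl2Triple h e f)
    {x : L} (hx : ⁅h, x⁆ = (4 : k) • x) :
    (∃ z : L, ⁅x, z⁆ = h) ↔
      ∀ y : L, ⁅x, y⁆ = 0 → ⁅h, y⁆ = 0 → killingForm k L h y = 0 :=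
  stmt_5_general (LieModule.traceForm_isSymm k L L).isRefl hKilling
    (LieModule.traceForm_lieInvariant k L L) (disjoint_ker_range_toEnd_h k L ht) hx (lie_self h)
end
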